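/- arXiv:2209.04419 — 2 statements merged into one kernel-verified Lean document; each statement's English description precedes it below -/
import Mathlib

section
/- Let Q ∈ {1,−1,0}^m with counts N^+, N^-, N^0, let ε > 0, δ ∈ (0,1), s̃ ≥ 1, p ≥ 2, γ > 0, and set ε′ = ε/(4√(2 s̃ log(2/δ))). Let Q̂ ∈ {1, 0, −1} be a random sign sampled with P(Q̂ = θ) proportional to exp(ε′ f(Q, θ)/4) for θ ∈ {1, 0, −1}. If f(Q, 1) = N^+ − N^0 − N^- ≥ 8(γ+1)√(2 s̃ log(2/δ)) log p / ε, then P(Q̂ = 1) ≥ 1 − 2 p^{−γ−1}. -/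
open MeasureTheory ProbabilityTheory Real

instance : MeasurableSpace SignType := ⊤

/-- Number of coordinates reporting `+1`. -/
def Nplus {m : ℕ} (Q : Fin m → SignType) : ℕ := (Finset.univ.filter fun j => Q j = 1).card

/-- Number of coordinates reporting `-1`. -/
def Nminus {m : ℕ} (Q : Fin m → SignType) : ℕ := (Finset.univ.filter fun j => Q j = -1).card

/-- Number of coordinates reporting `0`. -/
def Nzero {m : ℕ} (Q : Fin m → SignType) : ℕ := (Finset.univ.filter fun j => Q j = 0).card

/-- Utility functions `f(Q, θ)` for `θ ∈ {1, -1, 0}`. -/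
def utilFn {m : ℕ} (Q : Fin m → SignType) : SignType → ℤ
  | SignType.pos => (Nplus Q : ℤ) - Nzero Q - Nminus Q
  | SignType.neg => (Nminus Q : ℤ) - Nzero Q - Nplus Q
  | SignType.zero => min ((Nplus Q : ℤ) + Nzero Q - Nminus Q) ((Nminus Q : ℤ) + Nzero Q - Nplus Q)

/-- if `Q̂` is sampled from the exponential mechanism with utilities
`f(Q, θ)` at privacy level `ε′ = ε/(4√(2 s̃ log(2/δ)))`, and
`f(Q,1) ≥ 8(γ+1)√(2 s̃ log(2/δ)) log p / ε`, then `P(Q̂ = 1) ≥ 1 − 2 p^{−γ−1}`. -/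
theorem expMech_selects_pos {Ω : Type*} [MeasurableSpace Ω]
    (P : Measure Ω) [IsProbabilityMeasure P]
    (m st p : ℕ) (hst : 1 ≤ st) (hp : 2 ≤ p)
    (ε δ γ : ℝ) (hε : 0 < ε) (hδ0 : 0 < δ) (hδ1 : δ < 1) (hγ : 0 < γ)
    (Q : Fin m → SignType) (Qhat : Ω → SignType)
    (hlaw : ∀ θ : SignType, P {ω | Qhat ω = θ} =
      ENNReal.ofReal
        (Real.exp (ε / (4 * Real.sqrt (2 * st * Real.log (2 / δ))) * (utilFn Q θ : ℝ) / 4) /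
          ∑ θ' : SignType,
            Real.exp (ε / (4 * Real.sqrt (2 * st * Real.log (2 / δ))) * (utilFn Q θ' : ℝ) / 4)))
    (hf : 8 * (γ + 1) * Real.sqrt (2 * st * Real.log (2 / δ)) * Real.log p / ε ≤
      (utilFn Q 1 : ℝ)) :
    ENNReal.ofReal (1 - 2 * (p : ℝ) ^ (-γ - 1)) ≤ P {ω | Qhat ω = 1} := by
  have hlog : 0 < Real.log (2 / δ) := Real.log_pos (by rw [lt_div_iff₀ hδ0]; linarith)
  have hst' : (1 : ℝ) ≤ st := by exact_mod_cast hst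
  have hS : 0 < Real.sqrt (2 * st * Real.log (2 / δ)) := Real.sqrt_pos.mpr (by positivity)
  rw [hlaw 1]
  generalize Real.sqrt (2 * st * Real.log (2 / δ)) = S at *
  apply ENNReal.ofReal_le_ofReal
  have hp0 : (0 : ℝ) < p := by exact_mod_cast (by omega : 0 < p)
  have h0 : utilFn Q 0 ≤ - utilFn Q 1 := by
    change min ((Nplus Q : ℤ) + Nzero Q - Nminus Q) ((Nminus Q : ℤ) + Nzero Q - Nplus Q)
      ≤ -((Nplus Q : ℤ) - Nzero Q - Nminus Q)
    omega
  have h1 : utilFn Q (-1) ≤ - utilFn Q 1 := by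
    change (Nminus Q : ℤ) - Nzero Q - Nplus Q ≤ -((Nplus Q : ℤ) - Nzero Q - Nminus Q)
    omega
  have h0' : (utilFn Q 0 : ℝ) ≤ - (utilFn Q 1 : ℝ) := by exact_mod_cast h0
  have h1' : (utilFn Q (-1) : ℝ) ≤ - (utilFn Q 1 : ℝ) := by exact_mod_cast h1
  have hsum : ∀ g : SignType → ℝ, ∑ θ : SignType, g θ = g 1 + g 0 + g (-1) := by
    intro g
    have hu : (Finset.univ : Finset SignType) = {1, 0, -1} := by decide
    rw [hu, Finset.sum_insert (by decide), Finset.sum_insert (by decide), Finset.sum_singleton]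
    ring
  rw [hsum]
  generalize (utilFn Q 0 : ℝ) = v at *
  generalize (utilFn Q (-1) : ℝ) = w at *
  generalize (utilFn Q 1 : ℝ) = u at *
  have hc : 0 < ε / (4 * S) := by positivity
  have hcu : 2 * (γ + 1) * Real.log p ≤ ε / (4 * S) * u := by
    calc 2 * (γ + 1) * Real.log p
        = ε / (4 * S) * (8 * (γ + 1) * S * Real.log p / ε) := by field_simp; ring
      _ ≤ _ := mul_le_mul_of_nonneg_left hf hc.le
  generalize ε / (4 * S) = c at *
  have key : ∀ y : ℝ, y ≤ -u →
      Real.exp (c * y / 4) ≤ (p : ℝ) ^ (-γ - 1) * Real.exp (c * u / 4) := by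
    intro y hy
    rw [Real.rpow_def_of_pos hp0, ← Real.exp_add]
    apply Real.exp_le_exp.mpr
    have := mul_le_mul_of_nonneg_left hy hc.le
    linarith
  have kv := key v h0'
  have kw := key w h1'
  have hx : 0 < (p : ℝ) ^ (-γ - 1) := Real.rpow_pos_of_pos hp0 _
  have ha := Real.exp_pos (c * u / 4)
  have hb := Real.exp_pos (c * v / 4)
  have hd := Real.exp_pos (c * w / 4)
  generalize (p : ℝ) ^ (-γ - 1) = x at *
  generalize Real.exp (c * u / 4) = a at *
  generalize Real.exp (c * v / 4) = b at *
  generalize Real.exp (c * w / 4) = d at *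
  rw [le_div_iff₀ (by positivity)]
  rcases le_total (1 - 2 * x) 0 with h | h
  · have := mul_nonpos_of_nonpos_of_nonneg h (by positivity : 0 ≤ a + b + d)
    linarith
  · have h2 := mul_le_mul_of_nonneg_left (by linarith : a + b + d ≤ a + 2 * (x * a)) h
    have h3 : 0 ≤ x * x * a := by positivity
    linarith
end

section
/- Let Q ∈ {1,−1,0}^m with counts N^+, N^-, N^0, let ε > 0, δ ∈ (0,1), s̃ ≥ 1, p ≥ 2, γ > 0, and set ε′ = ε/(4√(2 s̃ log(2/δ))). Let Q̂ ∈ {1, 0, −1} be a random sign sampled with P(Q̂ = θ) proportional to exp(ε′ f(Q, θ)/4) for θ ∈ {1, 0, −1}. If f(Q, 0) = min{N^+ + N^0 − N^-, N^- + N^0 − N^+} ≥ 8(γ+1)√(2 s̃ log(2/δ)) log p / ε, then P(Q̂ = 0) ≥ 1 − 2 p^{−γ−1}. -/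
open MeasureTheory ProbabilityTheory Real

/-- if `Q̂` is sampled from the exponential mechanism with utilities
`f(Q, θ)` at privacy level `ε′ = ε/(4√(2 s̃ log(2/δ)))`, and
`f(Q,0) ≥ 8(γ+1)√(2 s̃ log(2/δ)) log p / ε`, then `P(Q̂ = 0) ≥ 1 − 2 p^{−γ−1}`. -/
theorem expMech_selects_zero {Ω : Type*} [MeasurableSpace Ω]
    (P : Measure Ω) [IsProbabilityMeasure P]
    (m st p : ℕ) (hst : 1 ≤ st) (hp : 2 ≤ p)
    (ε δ γ : ℝ) (hε : 0 < ε) (hδ0 : 0 < δ) (hδ1 : δ < 1) (hγ : 0 < γ)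
    (Q : Fin m → SignType) (Qhat : Ω → SignType)
    (hlaw : ∀ θ : SignType, P {ω | Qhat ω = θ} =
      ENNReal.ofReal
        (Real.exp (ε / (4 * Real.sqrt (2 * st * Real.log (2 / δ))) * (utilFn Q θ : ℝ) / 4) /
          ∑ θ' : SignType,
            Real.exp (ε / (4 * Real.sqrt (2 * st * Real.log (2 / δ))) * (utilFn Q θ' : ℝ) / 4)))
    (hf : 8 * (γ + 1) * Real.sqrt (2 * st * Real.log (2 / δ)) * Real.log p / ε ≤
      (utilFn Q 0 : ℝ)) :
    ENNReal.ofReal (1 - 2 * (p : ℝ) ^ (-γ - 1)) ≤ P {ω | Qhat ω = 0} := by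
  rw [hlaw 0]
  apply ENNReal.ofReal_le_ofReal
  have hS : 0 < Real.sqrt (2 * st * Real.log (2 / δ)) := by
    apply Real.sqrt_pos.mpr
    have h1 : 0 < Real.log (2 / δ) := by
      apply Real.log_pos
      rw [lt_div_iff₀ hδ0]
      linarith
    have h2 : (0 : ℝ) < st := by exact_mod_cast hst
    positivity
  have hsum : ∀ g : SignType → ℝ, ∑ θ, g θ = g 0 + g (-1) + g 1 := by
    intro g
    have : (Finset.univ : Finset SignType) = {0, -1, 1} := by decide
    rw [this, Finset.sum_insert (by decide), Finset.sum_insert (by decide),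
      Finset.sum_singleton]
    ring
  rw [hsum]
  have hp0 : (0 : ℝ) < p := by
    have : 0 < p := by omega
    exact_mod_cast this
  have hP : utilFn Q 1 ≤ - utilFn Q 0 := by
    change (Nplus Q : ℤ) - Nzero Q - Nminus Q ≤ -(min ((Nplus Q : ℤ) + Nzero Q - Nminus Q) ((Nminus Q : ℤ) + Nzero Q - Nplus Q))
    omega
  have hN : utilFn Q (-1) ≤ - utilFn Q 0 := by
    change (Nminus Q : ℤ) - Nzero Q - Nplus Q ≤ -(min ((Nplus Q : ℤ) + Nzero Q - Nminus Q) ((Nminus Q : ℤ) + Nzero Q - Nplus Q))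
    omega
  have hP' : (utilFn Q 1 : ℝ) ≤ - (utilFn Q 0 : ℝ) := by exact_mod_cast hP
  have hN' : (utilFn Q (-1) : ℝ) ≤ - (utilFn Q 0 : ℝ) := by exact_mod_cast hN
  generalize Real.sqrt (2 * st * Real.log (2 / δ)) = S at *
  have key : (γ + 1) * Real.log p ≤ ε / (4 * S) * (utilFn Q 0 : ℝ) / 2 := by
    have h := mul_le_mul_of_nonneg_left hf (show 0 ≤ ε / (8 * S) by positivity)
    have e1 : ε / (8 * S) * (8 * (γ + 1) * S * Real.log p / ε) = (γ + 1) * Real.log p := by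
      field_simp
    have e2 : ε / (8 * S) * (utilFn Q 0 : ℝ) = ε / (4 * S) * (utilFn Q 0 : ℝ) / 2 := by
      field_simp
      ring
    linarith
  have hc : 0 < ε / (4 * S) := by positivity
  generalize ε / (4 * S) = c at *
  have bd : ∀ u : ℝ, u ≤ - (utilFn Q 0 : ℝ) →
      Real.exp (c * u / 4) ≤ (p : ℝ) ^ (-γ - 1) * Real.exp (c * (utilFn Q 0 : ℝ) / 4) := by
    intro u hu
    rw [Real.rpow_def_of_pos hp0, ← Real.exp_add]
    apply Real.exp_le_exp.mpr
    have := mul_le_mul_of_nonneg_left hu hc.le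
    nlinarith
  have b1 := bd _ hP'
  have b2 := bd _ hN'
  have ht : 0 < (p : ℝ) ^ (-γ - 1) := Real.rpow_pos_of_pos hp0 _
  have x0 := Real.exp_pos (c * (utilFn Q 0 : ℝ) / 4)
  have x1 := Real.exp_pos (c * (utilFn Q 1 : ℝ) / 4)
  have x2 := Real.exp_pos (c * (utilFn Q (-1) : ℝ) / 4)
  rw [le_div_iff₀ (by positivity)]
  nlinarith [mul_pos ht x1, mul_pos ht x2]
end
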